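/- Let f : C_p → C_p be locally analytic on C_p. Then for every x ∈ C_p, the limit F(x) := lim_{n→∞} (1/p^n) ∑_{j=0}^{p^n - 1} f(x+j) exists (the Volkenborn integral of t ↦ f(x+t)). -/

import Mathlib

open Filter

lemma vk_sum_block {M : Type*} [AddCommMonoid M] (F : ℕ → M) (m k : ℕ) :
    ∑ j ∈ Finset.range (m * k), F j
      = ∑ j ∈ Finset.range m, ∑ i ∈ Finset.range k, F (m * i + j) := by
  rw [Finset.sum_comm]
  induction k with
  | zero => simp
  | succ k ih =>
    rw [Nat.mul_succ, Finset.sum_range_add, ih, Finset.sum_range_succ]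

lemma vk_norm_nat (p : ℕ) [Fact p.Prime] (K : Type*)
    [NontriviallyNormedField K]
    [Algebra ℚ_[p] K] (hiso : ∀ q : ℚ_[p], ‖algebraMap ℚ_[p] K q‖ = ‖q‖) :
    ‖(p : K)‖ = (p : ℝ)⁻¹ := by
  have := hiso (p : ℚ_[p])
  rw [map_natCast, Padic.norm_p] at this
  exact this

/-- Uniform estimates along the compact set `x + ℤ_p`. -/
lemma vk_uniform (p : ℕ) [Fact p.Prime] (K : Type*)
    [NontriviallyNormedField K]
    [Algebra ℚ_[p] K] (hiso : ∀ q : ℚ_[p], ‖algebraMap ℚ_[p] K q‖ = ‖q‖)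
    (P : K → K → Prop) (x : K)
    (hP : ∀ a : K, ∀ᶠ z : K × K in nhds (0, a), P z.1 z.2) :
    ∀ᶠ n : ℕ in atTop, ∀ i ∈ Finset.range p, ∀ j : ℕ, P ((p : K) ^ n * i) (x + j) := by
  have hisom : Isometry (algebraMap ℚ_[p] K) :=
    AddMonoidHomClass.isometry_of_norm _ hiso
  have hc : IsCompact (Set.range fun t : ℤ_[p] => x + algebraMap ℚ_[p] K (t : ℚ_[p])) := by
    apply isCompact_range
    exact continuous_const.add (hisom.continuous.comp continuous_subtype_val)
  have h := hc.eventually_forall_of_forall_eventually (x₀ := (0 : K)) (P := P)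
    (fun a _ => hP a)
  have hp1 : ‖(p : K)‖ < 1 := by
    rw [vk_norm_nat p K hiso]
    exact inv_lt_one_of_one_lt₀ (by exact_mod_cast (Fact.out : p.Prime).one_lt)
  rw [Filter.eventually_all_finset]
  intro i _
  have ht : Tendsto (fun n : ℕ => (p : K) ^ n * i) atTop (nhds 0) := by
    simpa using (tendsto_pow_atTop_nhds_zero_of_norm_lt_one hp1).mul_const (i : K)
  filter_upwards [ht.eventually h] with n hn j
  exact hn _ ⟨(j : ℤ_[p]), by simp⟩

lemma vk_sum_tendsto_zero (p : ℕ) [Fact p.Prime] (K : Type*)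
    [NontriviallyNormedField K] [IsUltrametricDist K]
    [Algebra ℚ_[p] K] (hiso : ∀ q : ℚ_[p], ‖algebraMap ℚ_[p] K q‖ = ‖q‖)
    (g : K → K) (hg : Continuous g) (x : K) :
    Tendsto (fun n : ℕ => ∑ j ∈ Finset.range (p ^ n), g (x + (j : K))) atTop (nhds 0) := by
  set T : ℕ → K := fun n => ∑ j ∈ Finset.range (p ^ n), g (x + (j : K)) with hT
  have hp0 : (0 : ℝ) ≤ (p : ℝ)⁻¹ := by positivity
  have hp1 : (p : ℝ)⁻¹ < 1 :=
    inv_lt_one_of_one_lt₀ (by exact_mod_cast (Fact.out : p.Prime).one_lt)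
  rw [Metric.tendsto_atTop]
  intro ε hε
  have hu := vk_uniform p K hiso (fun h y => ‖g (y + h) - g y‖ ≤ ε / 2) x (by
    intro a
    have : Tendsto (fun z : K × K => ‖g (z.2 + z.1) - g z.2‖) (nhds (0, a)) (nhds 0) := by
      have hcont : Continuous (fun z : K × K => ‖g (z.2 + z.1) - g z.2‖) := by fun_prop
      simpa using hcont.tendsto (0, a)
    exact this.eventually_le_const (half_pos hε))
  obtain ⟨N, hN⟩ := eventually_atTop.1 hu
  have step : ∀ n ≥ N, ‖T (n + 1)‖ ≤ max ((p : ℝ)⁻¹ * ‖T n‖) (ε / 2) := by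
    intro n hn
    have e : T (n + 1) = (p : K) * T n + ∑ j ∈ Finset.range (p ^ n), ∑ i ∈ Finset.range p,
        (g (x + j + (p : K) ^ n * i) - g (x + j)) := by
      simp only [hT]
      rw [pow_succ, vk_sum_block, Finset.mul_sum, ← Finset.sum_add_distrib]
      refine Finset.sum_congr rfl fun j _ => ?_
      rw [Finset.sum_sub_distrib, Finset.sum_const, Finset.card_range, nsmul_eq_mul,
        add_sub_cancel]
      refine Finset.sum_congr rfl fun i _ => ?_
      push_cast
      congr 1
      ring
    rw [e]
    refine (IsUltrametricDist.norm_add_le_max _ _).trans (max_le_max ?_ ?_)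
    · rw [norm_mul, vk_norm_nat p K hiso]
    · refine IsUltrametricDist.norm_sum_le_of_forall_le_of_nonneg (half_pos hε).le fun j _ => ?_
      exact IsUltrametricDist.norm_sum_le_of_forall_le_of_nonneg (half_pos hε).le
        fun i hi => hN n hn i hi j
  have it : ∀ k, ‖T (N + k)‖ ≤ max ((p : ℝ)⁻¹ ^ k * ‖T N‖) (ε / 2) := by
    intro k
    induction k with
    | zero => simp
    | succ k ih =>
      refine (step (N + k) (by omega)).trans (max_le ?_ (le_max_right _ _))
      refine (mul_le_mul_of_nonneg_left ih hp0).trans ?_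
      rw [mul_max_of_nonneg _ _ hp0]
      refine max_le_max (le_of_eq (by ring)) ?_
      nlinarith
  have hlim : Tendsto (fun k : ℕ => (p : ℝ)⁻¹ ^ k * ‖T N‖) atTop (nhds 0) := by
    simpa using (tendsto_pow_atTop_nhds_zero_of_lt_one hp0 hp1).mul_const ‖T N‖
  obtain ⟨k0, hk0⟩ := eventually_atTop.1 (hlim.eventually_lt_const hε)
  refine ⟨N + k0, fun n hn => ?_⟩
  obtain ⟨k, rfl⟩ := Nat.exists_eq_add_of_le (show N ≤ n by omega)
  rw [dist_zero_right]
  exact (it k).trans_lt (max_lt (hk0 k (by omega)) (half_lt_self hε))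

/-- For a locally analytic function `f : ℂ_p → ℂ_p`, the Volkenborn integral
`lim_{n→∞} p^{-n} ∑_{j<p^n} f(x+j)` exists for every `x`.  Here `ℂ_p` is modelled
by a complete algebraically closed nonarchimedean field `K` containing `ℚ_[p]`
isometrically, and "locally analytic" means analytic at every point. -/
theorem volkenborn_integral_exists (p : ℕ) [Fact p.Prime] (K : Type*)
    [NontriviallyNormedField K] [CompleteSpace K] [IsAlgClosed K] [IsUltrametricDist K]
    [Algebra ℚ_[p] K] (hiso : ∀ q : ℚ_[p], ‖algebraMap ℚ_[p] K q‖ = ‖q‖)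
    (f : K → K) (hf : ∀ a : K, AnalyticAt K f a) (x : K) :
    ∃ L : K,
      Tendsto (fun n : ℕ => ((p : K) ^ n)⁻¹ * ∑ j ∈ Finset.range (p ^ n), f (x + (j : K)))
        atTop (nhds L) := by
  set S : ℕ → K := fun n => ((p : K) ^ n)⁻¹ * ∑ j ∈ Finset.range (p ^ n), f (x + (j : K)) with hS
  have hcd : Continuous (deriv f) :=
    continuous_iff_continuousAt.2 fun a => (hf a).deriv.continuousAt
  have hpn : ‖(p : K)‖ = (p : ℝ)⁻¹ := vk_norm_nat p K hiso
  have hppos : (0 : ℝ) < p := by exact_mod_cast (Fact.out : p.Prime).pos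
  have hp0 : (p : K) ≠ 0 := by
    rw [← norm_pos_iff, hpn]; positivity
  have hT := vk_sum_tendsto_zero p K hiso (deriv f) hcd x
  apply cauchySeq_tendsto_of_complete
  apply NonarchimedeanAddGroup.cauchySeq_of_tendsto_sub_nhds_zero
  set c : K := (p : K)⁻¹ * ∑ i ∈ Finset.range p, (i : K) with hc
  set R : ℕ → K := fun n => ((p : K) ^ (n + 1))⁻¹ * ∑ j ∈ Finset.range (p ^ n),
    ∑ i ∈ Finset.range p, (f (x + j + (p : K) ^ n * i) - f (x + j)
      - deriv f (x + j) * ((p : K) ^ n * i)) with hR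
  have key : ∀ n, S (n + 1) - S n
      = c * ∑ j ∈ Finset.range (p ^ n), deriv f (x + (j : K)) + R n := by
    intro n
    have e1 : ∑ j ∈ Finset.range (p ^ (n + 1)), f (x + (j : K))
        = ∑ j ∈ Finset.range (p ^ n), ∑ i ∈ Finset.range p, f (x + j + (p : K) ^ n * i) := by
      rw [pow_succ, vk_sum_block]
      refine Finset.sum_congr rfl fun j _ => Finset.sum_congr rfl fun i _ => ?_
      push_cast
      congr 1
      ring
    simp only [hS, hR, hc, e1, Finset.sum_sub_distrib, Finset.sum_const, Finset.card_range,
      nsmul_eq_mul, ← Finset.mul_sum, ← Finset.sum_mul]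
    field_simp
    ring
  have hR0 : Tendsto R atTop (nhds 0) := by
    rw [Metric.tendsto_atTop]
    intro ε hε
    set η : ℝ := ε / 2 * (p : ℝ)⁻¹ with hη
    have hηpos : 0 < η := by positivity
    have hu := vk_uniform p K hiso
      (fun h y => ‖f (y + h) - f y - deriv f y * h‖ ≤ η * ‖h‖) x (by
      intro a
      have hs := (hf a).hasStrictDerivAt
      have h1 := hs.hasStrictFDerivAt.isLittleO.def (half_pos hηpos)
      have ht : Tendsto (fun z : K × K => (z.2 + z.1, z.2)) (nhds (0, a)) (nhds (a, a)) := by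
        have hcont : Continuous (fun z : K × K => (z.2 + z.1, z.2)) := by fun_prop
        simpa using hcont.tendsto (0, a)
      have ht2 : Tendsto (fun z : K × K => ‖deriv f a - deriv f z.2‖) (nhds (0, a)) (nhds 0) := by
        have hcont : Continuous (fun z : K × K => ‖deriv f a - deriv f z.2‖) := by fun_prop
        simpa using hcont.tendsto (0, a)
      filter_upwards [ht.eventually h1, ht2.eventually_le_const (half_pos hηpos)] with z hz1 hz2
      simp only [add_sub_cancel_left] at hz1
      have e : f (z.2 + z.1) - f z.2 - deriv f z.2 * z.1
          = (f (z.2 + z.1) - f z.2 - z.1 * deriv f a) + (deriv f a - deriv f z.2) * z.1 := by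
        ring
      rw [e]
      refine (norm_add_le _ _).trans ?_
      rw [norm_mul]
      have hz1' : ‖f (z.2 + z.1) - f z.2 - z.1 * deriv f a‖ ≤ η / 2 * ‖z.1‖ := by
        simpa using hz1
      nlinarith [norm_nonneg z.1])
    obtain ⟨N, hN⟩ := eventually_atTop.1 hu
    refine ⟨N, fun n hn => ?_⟩
    rw [dist_zero_right]
    have hb : ‖∑ j ∈ Finset.range (p ^ n),
        ∑ i ∈ Finset.range p, (f (x + j + (p : K) ^ n * i) - f (x + j)
          - deriv f (x + j) * ((p : K) ^ n * i))‖ ≤ η * ‖(p : K) ^ n‖ := by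
      have h0 : 0 ≤ η * ‖(p : K) ^ n‖ := by positivity
      refine IsUltrametricDist.norm_sum_le_of_forall_le_of_nonneg h0 fun j _ => ?_
      refine IsUltrametricDist.norm_sum_le_of_forall_le_of_nonneg h0 fun i hi => ?_
      refine (hN n hn i hi j).trans ?_
      refine mul_le_mul_of_nonneg_left ?_ hηpos.le
      rw [norm_mul]
      exact mul_le_of_le_one_right (norm_nonneg _) (IsUltrametricDist.norm_natCast_le_one K i)
    have hpp : 0 < ‖(p : K) ^ n‖ := norm_pos_iff.2 (pow_ne_zero _ hp0)
    calc ‖R n‖ ≤ ‖(p : K) ^ (n + 1)‖⁻¹ * (η * ‖(p : K) ^ n‖) := by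
          rw [hR]
          simp only [norm_mul, norm_inv]
          exact mul_le_mul_of_nonneg_left hb (by positivity)
      _ = ε / 2 := by
          rw [pow_succ, norm_mul, hpn, hη]
          field_simp
      _ < ε := half_lt_self hε
  have := (hT.const_mul c).add hR0
  rw [mul_zero, add_zero] at this
  exact this.congr fun n => (key n).symm
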